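/- arXiv:2303.04125 — 4 statements merged into one kernel-verified Lean document; each statement's English description precedes it below -/
import Mathlib

section
/- Let λ be an infinite cardinal and let S be a family of subsets of λ with |S| > ded λ. Then for every natural number n there exist ordinals α_0 < α_1 < … < α_{n-1} < λ such that S shatters the set {α_0,…,α_{n-1}}: for every subset w ⊆ {0,…,n-1} there is a set D ∈ S such that for all j < n, α_j ∈ D if and only if j ∈ w. -/
open Cardinal

/-- `B` is a branch of length `μ` of the tree `(T, r)`: a downward-closed set that is
enumerated, in increasing `r`-order, by a function from (the canonical type of order
type) `μ`. -/
def IsBranchOfLength {T : Type} (r : T → T → Prop) (μ : Cardinal.{0}) (B : Set T) : Prop :=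
  (∀ x ∈ B, ∀ y, r y x → y ∈ B) ∧
  ∃ f : μ.ord.ToType → T, (∀ i j, i < j → r (f i) (f j)) ∧ Set.range f = B

/-- `ded λ`: the supremum of the set of cardinals `κ` for which there exist a regular
cardinal `μ` and a tree (a strict order in which the set of predecessors of every node
is well-ordered) with at most `λ` nodes and `κ` branches of length `μ`. -/
noncomputable def ded (lam : Cardinal.{0}) : Cardinal.{0} :=
  sSup { k : Cardinal.{0} |
    ∃ μ : Cardinal.{0}, μ.IsRegular ∧
      ∃ (T : Type) (r : T → T → Prop),
        IsStrictOrder T r ∧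
        (∀ x : T, IsWellOrder {y // r y x} fun a b => r a.1 b.1) ∧
        Cardinal.mk T ≤ lam ∧
        k = Cardinal.mk {B : Set T // IsBranchOfLength r μ B} }

/-!
Approximating the elements of a set along a well-order, ever more finely, arranges them as
branches of the tree of approximations; hence at most `ded λ` objects can have a tree of
approximations with at most `λ` nodes. Restricting the members of `S` to proper initial segments
of `λ` gives such a tree. Call a node fat if more than `ded λ` members of `S` lie above it. If
there were at most `λ` fat nodes, then at most `ded λ` members of `S` would run through fat nodes
only, while any other member lies above one of at most `ded λ` minimal thin nodes, so `|S| ≤ ded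
λ`. Hence there are more than `λ` fat nodes. By induction each of them has above it a subfamily
shattering some `n`-element set, and by pigeonhole two fat nodes on the same level share that set;
adding a point at which these two nodes differ gives a shattered set with `n + 1` elements.
-/

universe u

theorem mk_biUnion_le_of_le {ι α : Type u} {κ : Cardinal.{u}} (hκ : ℵ₀ ≤ κ) {s : Set ι}
    {A : ι → Set α} (hs : #s ≤ κ) (hA : ∀ i ∈ s, #(A i) ≤ κ) : #(⋃ i ∈ s, A i) ≤ κ :=
  (mk_biUnion_le A s).trans (mul_le_of_le hκ hs (ciSup_le' fun i ↦ hA i i.2))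

theorem mk_finset_le_of_le {X : Type u} {κ : Cardinal.{u}} (hκ : ℵ₀ ≤ κ) (hX : #X ≤ κ) :
    #(Finset X) ≤ κ := by
  rcases finite_or_infinite X with _ | _
  · exact (lt_aleph0_of_finite _).le.trans hκ
  · rwa [mk_finset_of_infinite]

theorem exists_isRegular_strictMono_isCofinal (ι : Type u) [LinearOrder ι] [WellFoundedLT ι]
    [Nonempty ι] [NoMaxOrder ι] : ∃ μ : Cardinal.{u}, μ.IsRegular ∧
      ∃ g : μ.ord.ToType → ι, StrictMono g ∧ IsCofinal (Set.range g) := by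
  obtain ⟨C, hC, htype⟩ := Ordinal.exists_ord_cof_eq ι
  obtain ⟨e⟩ := Ordinal.type_eq.1 ((Ordinal.type_toType _).trans htype.symm)
  have hmono : StrictMono fun i ↦ (e i : ι) := fun i j hij ↦ e.map_rel_iff.2 hij
  refine ⟨Order.cof ι, ⟨Order.aleph0_le_cof, (Order.cof_ord_cof ι).ge⟩, _, hmono, fun x ↦ ?_⟩
  obtain ⟨c, hc, hxc⟩ := hC x
  exact ⟨c, ⟨e.symm ⟨c, hc⟩, by simp⟩, hxc⟩

section Approximation

variable {ι α β : Type*} {ρ : ι → α → β}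

/-- The nodes of the tree of approximations of `α`, where `ρ i a` is the approximation of `a` at
level `i`. Nodes remember their level, since equal values at different levels must stay distinct. -/
def approxNodes (ρ : ι → α → β) : Set (ι × β) := {p | ∃ a, ρ p.1 a = p.2}

/-- The thread of an element `a` in the tree of approximations: the nodes approximating `a`. -/
def thread (ρ : ι → α → β) (a : α) : Set (approxNodes ρ) := {p | ρ p.1.1 a = p.1.2}

theorem thread_injective (hinj : Function.Injective (Function.swap ρ)) :
    Function.Injective (thread ρ) := by
  intro a b hab
  refine hinj (funext fun i ↦ ?_)
  have hmem : (⟨(i, ρ i a), a, rfl⟩ : approxNodes ρ) ∈ thread ρ b := hab ▸ rfl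
  exact Eq.symm hmem

variable [Preorder ι]

/-- The order of the tree of approximations: `p` precedes `q` if its level is smaller and both
approximate a common element. It is transitive when the approximations become finer, which we
express as `Antitone fun i ↦ Setoid.ker (ρ i)`. -/
def ApproxLT (ρ : ι → α → β) (p q : approxNodes ρ) : Prop :=
  p.1.1 < q.1.1 ∧ ∃ a, ρ p.1.1 a = p.1.2 ∧ ρ q.1.1 a = q.1.2

theorem ApproxLT.eq_left_of_eq_right (hρ : Antitone fun i ↦ Setoid.ker (ρ i)) {p q : approxNodes ρ}
    (h : ApproxLT ρ p q) {a : α} (ha : ρ q.1.1 a = q.1.2) : ρ p.1.1 a = p.1.2 := by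
  obtain ⟨hlt, b, hbp, hbq⟩ := h
  exact (hρ hlt.le (ha.trans hbq.symm)).trans hbp

theorem isStrictOrder_approxLT (hρ : Antitone fun i ↦ Setoid.ker (ρ i)) :
    IsStrictOrder (approxNodes ρ) (ApproxLT ρ) where
  irrefl _ h := lt_irrefl _ h.1
  trans _ _ _ hpq hqr :=
    let ⟨a, haq, har⟩ := hqr.2
    ⟨hpq.1.trans hqr.1, a, hpq.eq_left_of_eq_right hρ haq, har⟩

theorem isWellOrder_approxLT_predecessors {ι : Type*} [LinearOrder ι] [WellFoundedLT ι]
    {ρ : ι → α → β} (hρ : Antitone fun i ↦ Setoid.ker (ρ i)) (r : approxNodes ρ) :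
    IsWellOrder {p // ApproxLT ρ p r} fun p q ↦ ApproxLT ρ p.1 q.1 where
  trichotomous := by
    rintro ⟨p, hp⟩ ⟨q, hq⟩ hpq hqp
    obtain ⟨a, ha⟩ := r.2
    have hap : ρ p.1.1 a = p.1.2 := hp.eq_left_of_eq_right hρ ha
    have haq : ρ q.1.1 a = q.1.2 := hq.eq_left_of_eq_right hρ ha
    have hlevel : p.1.1 = q.1.1 :=
      le_antisymm (not_lt.1 fun h ↦ hqp ⟨h, a, haq, hap⟩) (not_lt.1 fun h ↦ hpq ⟨h, a, hap, haq⟩)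
    exact Subtype.ext (Subtype.ext (Prod.ext hlevel (by rw [← hap, ← haq, hlevel])))
  wf := Subrelation.wf And.left
    (InvImage.wf (fun p : {p // ApproxLT ρ p r} ↦ p.1.1.1) wellFounded_lt)

end Approximation

section Ded

variable {α β : Type} {lam : Cardinal.{0}}

theorem isBranchOfLength_thread {μ : Cardinal.{0}} {ρ : μ.ord.ToType → α → β}
    (hρ : Antitone fun i ↦ Setoid.ker (ρ i)) (a : α) :
    IsBranchOfLength (ApproxLT ρ) μ (thread ρ a) := by
  refine ⟨fun q hq p hpq ↦ hpq.eq_left_of_eq_right hρ hq, fun i ↦ ⟨(i, ρ i a), a, rfl⟩,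
    fun i j hij ↦ ⟨hij, a, rfl, rfl⟩, ?_⟩
  ext ⟨⟨i, y⟩, hy⟩
  simp [thread, Subtype.ext_iff]

theorem mk_branches_le_ded {μ : Cardinal.{0}} (hμ : μ.IsRegular) {T : Type} (r : T → T → Prop)
    (hr : IsStrictOrder T r) (hwo : ∀ x : T, IsWellOrder {y // r y x} fun a b ↦ r a.1 b.1)
    (hT : #T ≤ lam) : #{B : Set T // IsBranchOfLength r μ B} ≤ ded lam := by
  refine le_csSup ⟨2 ^ lam, ?_⟩ ⟨μ, hμ, T, r, hr, hwo, hT, rfl⟩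
  rintro _ ⟨_, -, T', _, -, -, hT', rfl⟩
  calc #{B : Set T' // IsBranchOfLength _ _ B} ≤ #(Set T') := mk_subtype_le _
    _ = 2 ^ #T' := mk_set
    _ ≤ 2 ^ lam := power_le_power_left two_ne_zero hT'

theorem mk_le_ded_of_isRegular {μ : Cardinal.{0}} (hμ : μ.IsRegular) {ρ : μ.ord.ToType → α → β}
    (hρ : Antitone fun i ↦ Setoid.ker (ρ i)) (hinj : Function.Injective (Function.swap ρ))
    (hcard : #(approxNodes ρ) ≤ lam) : #α ≤ ded lam :=
  calc #α ≤ #{B // IsBranchOfLength (ApproxLT ρ) μ B} :=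
        mk_le_of_injective (f := fun a ↦ ⟨thread ρ a, isBranchOfLength_thread hρ a⟩)
          fun _ _ h ↦ thread_injective hinj (Subtype.mk.inj h)
    _ ≤ ded lam := mk_branches_le_ded hμ _ (isStrictOrder_approxLT hρ)
        (isWellOrder_approxLT_predecessors hρ) hcard

theorem le_ded (hlam : ℵ₀ ≤ lam) : lam ≤ ded lam := by
  -- The constant approximations along `ω` give `λ` disjoint chains of length `ω`.
  let ρ : (ℵ₀ : Cardinal.{0}).ord.ToType → lam.ord.ToType → lam.ord.ToType := fun _ ↦ id
  have : Nonempty (ℵ₀ : Cardinal.{0}).ord.ToType := by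
    simp [← mk_ne_zero_iff, aleph0_ne_zero]
  have hcard : #(approxNodes ρ) ≤ lam := by
    refine (mk_set_le _).trans ?_
    simp [hlam]
  have hinj : Function.Injective (Function.swap ρ) := fun _ _ h ↦ congrFun h (Classical.arbitrary _)
  simpa using mk_le_ded_of_isRegular isRegular_aleph0 (fun _ _ _ ↦ le_rfl) hinj hcard

theorem mk_le_ded_of_antitone_ker {ι : Type} [LinearOrder ι] [WellFoundedLT ι]
    {ρ : ι → α → β} (hlam : ℵ₀ ≤ lam) (hρ : Antitone fun i ↦ Setoid.ker (ρ i))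
    (hinj : Function.Injective (Function.swap ρ)) (hcard : #(approxNodes ρ) ≤ lam) :
    #α ≤ ded lam := by
  rcases isEmpty_or_nonempty ι with _ | _
  · have : Subsingleton α := hinj.subsingleton
    exact (le_one_iff_subsingleton.2 this).trans (one_le_aleph0.trans (hlam.trans (le_ded hlam)))
  rcases topOrderOrNoTopOrder ι with _ | _
  · have hnode : Function.Injective fun a ↦ (⟨(⊤, ρ ⊤ a), a, rfl⟩ : approxNodes ρ) := fun a b h ↦
      hinj (funext fun _ ↦ hρ le_top (congrArg (fun p : approxNodes ρ ↦ p.1.2) h))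
    exact (mk_le_of_injective hnode).trans (hcard.trans (le_ded hlam))
  · have : NoMaxOrder ι := (noTopOrder_iff_noMaxOrder ι).1 ‹_›
    obtain ⟨μ, hμ, g, hg, hcof⟩ := exists_isRegular_strictMono_isCofinal ι
    have hginj : Function.Injective (Function.swap (ρ ∘ g)) := fun a b h ↦ hinj <| funext fun x ↦ by
      obtain ⟨_, ⟨i, rfl⟩, hxi⟩ := hcof x
      exact hρ hxi (congrFun h i)
    refine mk_le_ded_of_isRegular hμ (fun _ _ hij ↦ hρ (hg.monotone hij)) hginj (le_trans ?_ hcard)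
    exact mk_preimage_of_injective (Prod.map g id) _ (hg.injective.prodMap Function.injective_id)

end Ded

section Restriction

open Set hiding univ

theorem antitone_ker_inter {ι α X : Type*} [Preorder ι] (f : α → Set X) {C : ι → Set X}
    (hC : Monotone C) : Antitone fun i ↦ Setoid.ker fun a ↦ f a ∩ C i := by
  intro i j hij a b (hab : f a ∩ C j = f b ∩ C j)
  have hinter (s : Set X) : s ∩ C i = s ∩ C j ∩ C i := by
    rw [inter_assoc, inter_eq_right.2 (hC hij)]
  change f a ∩ C i = f b ∩ C i
  rw [hinter, hab, ← hinter]

/-- The subsets of `I` all of whose restrictions to `Iio b` with `b ∈ I`,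
recorded as pairs `(b, restriction)`, belong to `F`. -/
def pathsThrough {X : Type*} [Preorder X] (F : Set (X × Set X)) (I : Set X) : Set (Set X) :=
  {s | s ⊆ I ∧ ∀ b ∈ I, (b, s ∩ Iio b) ∈ F}

/-- The members of `S` lying above the node `(b, t)`, that is, restricting to `t` below `b`. -/
def restrictionFiber {X : Type*} [Preorder X] (S : Set (Set X)) (b : X) (t : Set X) :
    Set (Set X) :=
  {D ∈ S | D ∩ Iio b = t}

theorem subset_pathsThrough_union_iUnion_restrictionFiber {X : Type*} [LinearOrder X]
    [WellFoundedLT X] (S : Set (Set X)) (F : Set (X × Set X)) : S ⊆ pathsThrough F Set.univ ∪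
      ⋃ b ∈ Set.univ, ⋃ t ∈ {t ∈ pathsThrough F (Iio b) | (b, t) ∉ F}, restrictionFiber S b t := by
  intro D hD
  by_cases h : ∃ b, (b, D ∩ Iio b) ∉ F
  · obtain ⟨b, hb, hmin⟩ := WellFounded.has_min wellFounded_lt {b | (b, D ∩ Iio b) ∉ F} h
    have hpath : D ∩ Iio b ∈ pathsThrough F (Iio b) := by
      refine ⟨inter_subset_right, fun c hc ↦ ?_⟩
      rw [inter_assoc, inter_eq_right.2 (Iio_subset_Iio (le_of_lt hc))]
      exact not_not.1 fun hcF ↦ hmin c hcF hc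
    exact .inr (mem_biUnion trivial (mem_biUnion ⟨hpath, hb⟩ ⟨hD, rfl⟩))
  · push Not at h
    exact .inl ⟨subset_univ D, fun b _ ↦ h b⟩

/-- The fat nodes `(b, t)` of the tree of restrictions of `S`: those with more than `ded λ` members
of `S` above them. -/
def fatNodes {X : Type} [Preorder X] (lam : Cardinal.{0}) (S : Set (Set X)) : Set (X × Set X) :=
  {p | ded lam < #(restrictionFiber S p.1 p.2)}

variable {X : Type} [LinearOrder X] [WellFoundedLT X] {lam : Cardinal.{0}}

theorem mk_pathsThrough_le_ded (hlam : ℵ₀ ≤ lam) {F : Set (X × Set X)}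
    (hF : #F ≤ lam) (I : Set X) : #(pathsThrough F I) ≤ ded lam := by
  -- Restricting to `Iic b` instead of `Iio b` makes the restrictions separate points even if `I`
  -- has a largest element.
  let ρ : I → pathsThrough F I → Set X := fun b s ↦ s ∩ Iic b.1
  have hρ : Antitone fun b ↦ Setoid.ker (ρ b) :=
    antitone_ker_inter Subtype.val fun _ _ hbc ↦ Iic_subset_Iic.2 hbc
  have hinj : Function.Injective (Function.swap ρ) := by
    intro s t hst
    have hsub {u v : pathsThrough F I} (h : Function.swap ρ u = Function.swap ρ v) :
        u.1 ⊆ v.1 := fun x hx ↦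
      ((congrFun h ⟨x, u.2.1 hx⟩).subset ⟨hx, mem_Iic.2 le_rfl⟩).1
    exact Subtype.ext ((hsub hst).antisymm (hsub hst.symm))
  have hnodes : approxNodes ρ ⊆
      Prod.map Subtype.val id ⁻¹' (F ∪ (fun p ↦ (p.1, insert p.1 p.2)) '' F) := by
    rintro ⟨b, _⟩ ⟨s, rfl : s.1 ∩ Iic b.1 = _⟩
    have hsb : (b.1, s.1 ∩ Iio b.1) ∈ F := s.2.2 b b.2
    rw [← Iio_insert]
    by_cases hb : b.1 ∈ s.1
    · rw [inter_insert_of_mem hb]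
      exact .inr ⟨_, hsb, rfl⟩
    · rw [inter_insert_of_notMem hb]
      exact .inl hsb
  refine mk_le_ded_of_antitone_ker hlam hρ hinj ?_
  calc #(approxNodes ρ)
      ≤ #(Prod.map Subtype.val id ⁻¹' (F ∪ (fun p ↦ (p.1, insert p.1 p.2)) '' F) :
          Set (I × Set X)) := mk_le_mk_of_subset hnodes
    _ ≤ #(F ∪ (fun p ↦ (p.1, insert p.1 p.2)) '' F : Set (X × Set X)) :=
        mk_preimage_of_injective _ _ (Subtype.val_injective.prodMap Function.injective_id)
    _ ≤ lam := (mk_union_le _ _).trans (add_le_of_le hlam hF (mk_image_le.trans hF))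

theorem mk_le_ded_of_mk_restrictionFiber_le (hlam : ℵ₀ ≤ lam) (hX : #X ≤ lam)
    {S : Set (Set X)} {F : Set (X × Set X)} (hF : #F ≤ lam)
    (hthin : ∀ b t, (b, t) ∉ F → #(restrictionFiber S b t) ≤ ded lam) : #S ≤ ded lam := by
  have hle : lam ≤ ded lam := le_ded hlam
  have hded : ℵ₀ ≤ ded lam := hlam.trans hle
  refine (mk_le_mk_of_subset (subset_pathsThrough_union_iUnion_restrictionFiber S F)).trans ?_
  refine (mk_union_le _ _).trans (add_le_of_le hded (mk_pathsThrough_le_ded hlam hF Set.univ) ?_)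
  refine mk_biUnion_le_of_le hded (by simpa using hX.trans hle) fun b _ ↦ ?_
  refine mk_biUnion_le_of_le hded ?_ fun t ht ↦ hthin b t ht.2
  exact (mk_le_mk_of_subset (sep_subset _ _)).trans (mk_pathsThrough_le_ded hlam hF (Iio b))

theorem lt_mk_fatNodes (hlam : ℵ₀ ≤ lam) (hX : #X ≤ lam) {S : Set (Set X)}
    (hS : ded lam < #S) : lam < #(fatNodes lam S) := by
  by_contra! hfat
  exact hS.not_ge (mk_le_ded_of_mk_restrictionFiber_le hlam hX hfat fun _ _ h ↦ not_lt.1 h)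

end Restriction

section Shattering

open Set

variable {X : Type*} {S S₁ S₂ : Set (Set X)} {A : Set X} {c : X}

/-- The family `S` shatters `A` if every subset of `A` is the trace on `A` of a member of `S`; the
subset is given as the trace of an arbitrary set `w`. Unlike `Finset.Shatters`, this allows infinite
families of infinite sets. -/
def Shatters (S : Set (Set X)) (A : Set X) : Prop :=
  ∀ w : Set X, ∃ D ∈ S, ∀ x ∈ A, x ∈ D ↔ x ∈ w

theorem Shatters.notMem_of_forall_mem (h : Shatters S A) (hc : ∀ D ∈ S, c ∈ D) : c ∉ A := by
  intro hcA
  obtain ⟨D, hD, hDA⟩ := h ∅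
  exact (hDA c hcA).1 (hc D hD)

theorem Shatters.insert (h₁ : Shatters S₁ A) (h₂ : Shatters S₂ A) (hc₁ : ∀ D ∈ S₁, c ∈ D)
    (hc₂ : ∀ D ∈ S₂, c ∉ D) : Shatters (S₁ ∪ S₂) (insert c A) := by
  intro w
  by_cases hcw : c ∈ w
  · obtain ⟨D, hD, hDA⟩ := h₁ w
    exact ⟨D, .inl hD, forall_mem_insert.2 ⟨iff_of_true (hc₁ D hD) hcw, hDA⟩⟩
  · obtain ⟨D, hD, hDA⟩ := h₂ w
    exact ⟨D, .inr hD, forall_mem_insert.2 ⟨iff_of_false (hc₂ D hD) hcw, hDA⟩⟩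

theorem Shatters.mono (h : Shatters S₁ A) (hS : S₁ ⊆ S₂) : Shatters S₂ A := fun w ↦
  let ⟨D, hD, hDA⟩ := h w
  ⟨D, hS hD, hDA⟩

theorem exists_shatters_insert_of_shatters_restrictionFiber [Preorder X] {b : X} {t u : Set X}
    (htu : t ≠ u) (ht : Shatters (restrictionFiber S b t) A)
    (hu : Shatters (restrictionFiber S b u) A) :
    ∃ c ∉ A, Shatters S (insert c A) := by
  wlog hsub : ¬ t ⊆ u generalizing t u
  · exact this htu.symm hu ht fun hut ↦ htu ((not_not.1 hsub).antisymm hut)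
  obtain ⟨c, hct, hcu⟩ := not_subset.1 hsub
  have hcb : c < b := by
    obtain ⟨D, ⟨-, rfl⟩, -⟩ := ht ∅
    exact hct.2
  have hmem : ∀ D ∈ restrictionFiber S b t, c ∈ D := by
    rintro D ⟨-, rfl⟩
    exact hct.1
  have hnotMem : ∀ D ∈ restrictionFiber S b u, c ∉ D := by
    rintro D ⟨-, rfl⟩ hcD
    exact hcu ⟨hcD, hcb⟩
  exact ⟨c, ht.notMem_of_forall_mem hmem,
    (ht.insert hu hmem hnotMem).mono (union_subset (sep_subset _ _) (sep_subset _ _))⟩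

theorem exists_card_eq_shatters_of_ded_lt {X : Type} {lam : Cardinal.{0}} (hlam : ℵ₀ ≤ lam)
    (hX : #X ≤ lam) {S : Set (Set X)} (hS : ded lam < #S) (n : ℕ) :
    ∃ A : Finset X, A.card = n ∧ Shatters S A := by
  obtain ⟨_, _⟩ := exists_wellFoundedLT X
  induction n generalizing S with
  | zero =>
    obtain ⟨D, hD⟩ : S.Nonempty := by
      rw [← nonempty_coe_sort, ← mk_ne_zero_iff]
      exact hS.ne_bot
    exact ⟨∅, rfl, fun w ↦ ⟨D, hD, by simp⟩⟩
  | succ n ih =>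
    choose A hcard hA using fun p : fatNodes lam S ↦ ih p.2
    have hpigeonhole : ¬ Function.Injective fun p : fatNodes lam S ↦ (p.1.1, A p) := by
      refine fun hinj ↦ (lt_mk_fatNodes hlam hX hS).not_ge ((mk_le_of_injective hinj).trans ?_)
      simpa using mul_le_of_le hlam hX (mk_finset_le_of_le hlam hX)
    obtain ⟨⟨⟨b, t⟩, ht⟩, ⟨⟨_, u⟩, hu⟩, heq, hne⟩ := Function.not_injective_iff.1 hpigeonhole
    obtain ⟨rfl, hAeq⟩ := Prod.mk.inj heq
    have htu : t ≠ u := fun h ↦ hne (Subtype.ext (Prod.ext rfl h))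
    obtain ⟨c, hcA, hins⟩ :=
      exists_shatters_insert_of_shatters_restrictionFiber htu (hA ⟨_, ht⟩) (hAeq ▸ hA ⟨_, hu⟩)
    refine ⟨insert c (A ⟨(b, t), ht⟩), ?_, by rwa [Finset.coe_insert]⟩
    rw [Finset.card_insert_of_notMem hcA, hcard]

end Shattering

theorem stmt0_general {lam : Cardinal.{0}} (hlam : ℵ₀ ≤ lam) {X : Type} [LinearOrder X]
    (hX : #X ≤ lam) (S : Set (Set X)) (hS : ded lam < #S) (n : ℕ) :
    ∃ a : Fin n → X, StrictMono a ∧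
      ∀ w : Set (Fin n), ∃ D ∈ S, ∀ j : Fin n, a j ∈ D ↔ j ∈ w := by
  obtain ⟨A, hcard, hA⟩ := exists_card_eq_shatters_of_ded_lt hlam hX hS n
  let a : Fin n ↪o X := A.orderEmbOfFin hcard
  refine ⟨a, a.strictMono, fun w ↦ ?_⟩
  obtain ⟨D, hD, hDA⟩ := hA (a '' w)
  exact ⟨D, hD, fun j ↦
    (hDA _ (A.orderEmbOfFin_mem hcard j)).trans a.injective.mem_set_image⟩

/-- If `S` is a family of subsets of `λ` with `|S| > ded λ`, then for every `n < ω`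
there are ordinals `α_0 < … < α_{n-1} < λ` such that `S` shatters `{α_0, …, α_{n-1}}`. -/
theorem stmt0 (lam : Cardinal.{0}) (hlam : ℵ₀ ≤ lam)
    (S : Set (Set lam.ord.ToType)) (hS : ded lam < Cardinal.mk ↥S) (n : ℕ) :
    ∃ a : Fin n → lam.ord.ToType, StrictMono a ∧
      ∀ w : Set (Fin n), ∃ D ∈ S, ∀ j : Fin n, a j ∈ D ↔ j ∈ w :=
  stmt0_general hlam (mk_ord_toType lam).le S hS n
end

section
/- Let λ < μ be infinite cardinals with μ regular, and let S be a family of subsets of λ such that for every ordinal α < λ, |{A ∩ α : A ∈ S}| < μ. Define S¹ := {A ∈ S : for every α < λ, |{B ∈ S : B ∩ α = A ∩ α}| ≥ μ}. Then |S \ S¹| < μ. -/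
open Cardinal

/-!
A member of `S` fails to be fat because at some level `α` its trace `A ∩ α` is shared by fewer than
`μ` members. At a fixed level there are fewer than `μ` traces, so by regularity the traces that are
shared by fewer than `μ` members account for fewer than `μ` members altogether. Regularity applied
once more, to the fewer than `μ` levels, bounds the whole of `S \ S¹`. The traces enter only as the
values of one map per level.
-/

universe u

section FatMembers

variable {ι X : Type u} {Y : ι → Type u} {μ : Cardinal.{u}}

/-- The fat members of `S` with respect to a family of maps `f i`: those sharing each of their
values with at least `μ` members of `S`. The family `S¹` of the paper is the case
`f α A = A ∩ α`. -/
def fatMembers (μ : Cardinal.{u}) (f : ∀ i, X → Y i) (S : Set X) : Set X :=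
  {x ∈ S | ∀ i, μ ≤ #{y ∈ S | f i y = f i x}}

theorem sdiff_fatMembers_eq_iUnion (f : ∀ i, X → Y i) (S : Set X) :
    S \ fatMembers μ f S = ⋃ i, {x ∈ S | #{y ∈ S | f i y = f i x} < μ} := by
  ext x
  simp only [fatMembers, Set.mem_sdiff, Set.mem_ofPred_eq, Set.mem_iUnion, not_and, not_forall,
    not_le, exists_and_left]
  tauto

theorem sep_mk_fiber_lt_eq_biUnion {Z : Type u} (f : X → Z) (S : Set X) :
    {x ∈ S | #{y ∈ S | f y = f x} < μ} =
      ⋃ z ∈ {z ∈ f '' S | #{y ∈ S | f y = z} < μ}, {y ∈ S | f y = z} := by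
  ext x
  simp only [Set.mem_iUnion]
  constructor
  · rintro ⟨hx, hsmall⟩
    exact ⟨f x, ⟨Set.mem_image_of_mem f hx, hsmall⟩, hx, rfl⟩
  · rintro ⟨_, ⟨-, hsmall⟩, hx, rfl⟩
    exact ⟨hx, hsmall⟩

theorem mk_sep_mk_fiber_lt_of_isRegular (hμ : μ.IsRegular) {Z : Type u} {f : X → Z} {S : Set X}
    (himage : #(f '' S) < μ) : #{x ∈ S | #{y ∈ S | f y = f x} < μ} < μ := by
  have hvalues : #{z ∈ f '' S | #{y ∈ S | f y = z} < μ} < μ :=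
    (mk_le_mk_of_subset (Set.sep_subset _ _)).trans_lt himage
  rw [sep_mk_fiber_lt_eq_biUnion, card_biUnion_lt_iff_forall_of_isRegular hμ hvalues]
  exact fun _ hz => hz.2

theorem stmt2_general (hμ : μ.IsRegular) (hι : #ι < μ) {f : ∀ i, X → Y i} {S : Set X}
    (himage : ∀ i, #(f i '' S) < μ) : #↥(S \ fatMembers μ f S) < μ := by
  rw [sdiff_fatMembers_eq_iUnion, card_iUnion_lt_iff_forall_of_isRegular hμ hι]
  exact fun i => mk_sep_mk_fiber_lt_of_isRegular hμ (himage i)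

end FatMembers

/-- Let `λ < μ` be infinite cardinals with `μ` regular, and `S` a family of subsets of `λ`
(whose elements are represented as subsets of the canonical type of `λ`, with `A ∩ α`
rendered as `A ∩ Set.Iio a`).  Assume that for every `α < λ` the family of traces
`{A ∩ α : A ∈ S}` has cardinality `< μ`.  Then the family of non-fat members of `S`,
i.e. `S \ S¹` where `S¹ = {A ∈ S : ∀ α < λ, |{B ∈ S : B ∩ α = A ∩ α}| ≥ μ}`,
has cardinality `< μ`. -/
theorem stmt2 (lam μ : Cardinal.{0}) (hlam : ℵ₀ ≤ lam) (hlm : lam < μ) (hμ : μ.IsRegular)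
    (S : Set (Set lam.ord.ToType))
    (htrace : ∀ a : lam.ord.ToType,
      Cardinal.mk ↥{A : Set lam.ord.ToType | ∃ B ∈ S, A = B ∩ Set.Iio a} < μ) :
    Cardinal.mk ↥(S \ {A ∈ S | ∀ a : lam.ord.ToType,
      μ ≤ Cardinal.mk ↥{B ∈ S | B ∩ Set.Iio a = A ∩ Set.Iio a}}) < μ := by
  exact stmt2_general (f := fun a A => A ∩ Set.Iio a) hμ (by rwa [mk_ord_toType])
    (by simpa only [Set.image, eq_comm] using htrace)
end

section
/- Let λ < μ be infinite cardinals with μ regular, and let S be a family of subsets of λ such that for every ordinal α < λ, |{A ∩ α : A ∈ S}| < μ. Define S¹ := {A ∈ S : for every α < λ, |{B ∈ S : B ∩ α = A ∩ α}| ≥ μ}. Then for every A ∈ S¹ and every α < λ, |{B ∈ S¹ : B ∩ α = A ∩ α}| ≥ μ. -/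
open Cardinal

/-! Fix a level. If `A` is not fat because its trace there has fewer than `μ` extensions in `S`,
then `A` lies in one of fewer than `μ` fibres, each of size less than `μ`. There are fewer than
`μ` levels, so regularity of `μ`, applied once to the traces and once to the levels, shows that
fewer than `μ` members of `S` are not fat. Removing these from a subset of `S` of size at
least `μ` leaves at least `μ` elements. -/

universe u

theorem mk_setOf_mk_fiber_lt_lt {α β : Type u} {μ : Cardinal.{u}} (hμ : μ.IsRegular)
    {S : Set α} {f : α → β} (himage : #(f '' S) < μ) :
    #{x ∈ S | #{y ∈ S | f y = f x} < μ} < μ := by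
  let smallValues : Set β := {b ∈ f '' S | #{y ∈ S | f y = b} < μ}
  have hcover : {x ∈ S | #{y ∈ S | f y = f x} < μ} ⊆
      ⋃ b : smallValues, {y ∈ S | f y = b} :=
    fun x ⟨hxS, hx⟩ => Set.mem_iUnion.2 ⟨⟨f x, ⟨x, hxS, rfl⟩, hx⟩, hxS, rfl⟩
  have hvalues : #smallValues < μ := (mk_le_mk_of_subset (Set.sep_subset _ _)).trans_lt himage
  exact (mk_le_mk_of_subset hcover).trans_lt <|
    (card_iUnion_lt_iff_forall_of_isRegular hμ hvalues).2 fun b => b.2.2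

section FatPart

variable {ι α : Type u} {β : ι → Type u} {f : ∀ i, α → β i} {S : Set α} {μ : Cardinal.{u}}

/-- The family `S¹` of fat members of `S`, those that share each of their traces with at least `μ`
members of `S`. The trace at level `i` is an arbitrary map `f i`; for sets of ordinals it is
`A ↦ A ∩ i`. -/
def fatPart (f : ∀ i, α → β i) (S : Set α) (μ : Cardinal.{u}) : Set α :=
  {x ∈ S | ∀ i, μ ≤ #{y ∈ S | f i y = f i x}}

theorem mk_diff_fatPart_lt (hμ : μ.IsRegular) (hι : #ι < μ) (htrace : ∀ i, #(f i '' S) < μ) :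
    #(S \ fatPart f S μ : Set α) < μ := by
  have hdiff : S \ fatPart f S μ = ⋃ i, {x ∈ S | #{y ∈ S | f i y = f i x} < μ} := by
    ext x
    simp [fatPart]
  rw [hdiff]
  exact (card_iUnion_lt_iff_forall_of_isRegular hμ hι).2 fun i =>
    mk_setOf_mk_fiber_lt_lt hμ (htrace i)

theorem le_mk_inter_fatPart (hμ : μ.IsRegular) (hι : #ι < μ) (htrace : ∀ i, #(f i '' S) < μ)
    {T : Set α} (hTS : T ⊆ S) (hT : μ ≤ #T) : μ ≤ #(T ∩ fatPart f S μ : Set α) := by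
  by_contra! hlt
  have hcover : T ⊆ T ∩ fatPart f S μ ∪ S \ fatPart f S μ := by grind
  have hle : #T ≤ #(T ∩ fatPart f S μ : Set α) + #(S \ fatPart f S μ : Set α) :=
    (mk_le_mk_of_subset hcover).trans (mk_union_le _ _)
  have hsum := add_lt_of_lt hμ.aleph0_le hlt (mk_diff_fatPart_lt hμ hι htrace)
  exact (hT.trans hle).not_gt hsum

theorem stmt3_general (hμ : μ.IsRegular) (hι : #ι < μ) (htrace : ∀ i, #(f i '' S) < μ)
    {x : α} (hx : x ∈ fatPart f S μ) (i : ι) :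
    μ ≤ #{y ∈ fatPart f S μ | f i y = f i x} :=
  (le_mk_inter_fatPart hμ hι htrace (Set.sep_subset _ _) (hx.2 i)).trans <|
    mk_le_mk_of_subset fun _ ⟨⟨_, hfiber⟩, hfat⟩ => ⟨hfat, hfiber⟩

end FatPart

/-- Let `λ < μ` be infinite cardinals with `μ` regular, and `S` a family of subsets of `λ`
(whose elements are represented as subsets of the canonical type of `λ`, with `A ∩ α`
rendered as `A ∩ Set.Iio a`).  Assume that for every `α < λ` the family of traces
`{A ∩ α : A ∈ S}` has cardinality `< μ`.  Let
`S¹ = {A ∈ S : ∀ α < λ, |{B ∈ S : B ∩ α = A ∩ α}| ≥ μ}` be the family of fat members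
of `S`.  Then for every `A ∈ S¹` and every `α < λ`,
`|{B ∈ S¹ : B ∩ α = A ∩ α}| ≥ μ`. -/
theorem stmt3 (lam μ : Cardinal.{0}) (hlam : ℵ₀ ≤ lam) (hlm : lam < μ) (hμ : μ.IsRegular)
    (S : Set (Set lam.ord.ToType))
    (htrace : ∀ a : lam.ord.ToType,
      Cardinal.mk ↥{A : Set lam.ord.ToType | ∃ B ∈ S, A = B ∩ Set.Iio a} < μ)
    (S1 : Set (Set lam.ord.ToType))
    (hS1 : S1 = {A ∈ S | ∀ a : lam.ord.ToType,
      μ ≤ Cardinal.mk ↥{B ∈ S | B ∩ Set.Iio a = A ∩ Set.Iio a}}) :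
    ∀ A ∈ S1, ∀ a : lam.ord.ToType,
      μ ≤ Cardinal.mk ↥{B ∈ S1 | B ∩ Set.Iio a = A ∩ Set.Iio a} := by
  subst hS1
  exact fun A hA => stmt3_general (f := fun a B => B ∩ Set.Iio a) hμ (by simpa using hlm)
    (by simpa only [Set.image, eq_comm] using htrace) hA
end

section
/- Let L be a first-order language, T an L-theory with built-in Skolem functions, and Γ a set of L-types. Let α be an ordinal and (c_i)_{i<α} constant symbols not in L. For every finite subset S ⊆ α let p_S be a complete T-type in |S| variables, and let T* be a theory in the language L ∪ {c_i : i < α} such that: (1) T* extends T ∪ {p_S((c_γ)_{γ∈S}) : S ⊆ α finite} and T* is consistent; (2) every sentence of T* not among the sentences p_S((c_γ)_{γ∈S}) is an L-sentence (mentions none of the new constants); (3) each p_S is realized in some member of EC(T,Γ). Then there is a model N of T* that omits every type in Γ, i.e. N ∈ EC(T*,Γ). -/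
open FirstOrder FirstOrder.Language

/-- The structure `M` omits the type `p` (a set of `L`-formulas in `n` free variables):
no `n`-tuple of elements of `M` realizes every formula of `p`. -/
def OmitsIn (L : FirstOrder.Language.{0, 0}) (M : Type) [L.Structure M] {n : ℕ}
    (p : Set (L.Formula (Fin n))) : Prop :=
  ¬ ∃ v : Fin n → M, ∀ φ ∈ p, φ.Realize v

/-- `T` has built-in Skolem functions: for every formula `φ(x, y₀, …, y_{k-1})` there is a
term `t(y₀, …, y_{k-1})` such that `T ⊨ ∀ȳ (∃x φ(x, ȳ) → φ(t(ȳ), ȳ))`. -/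
def HasBuiltInSkolem (L : FirstOrder.Language.{0, 0}) (T : L.Theory) : Prop :=
  ∀ (k : ℕ) (φ : L.BoundedFormula (Fin k) 1), ∃ t : L.Term (Fin k),
    ∀ (M : Theory.ModelType.{0,0,0} T) (v : Fin k → M),
      (∃ x : M, φ.Realize v ![x]) → φ.Realize v ![t.realize v]

/-- `p` is a complete `T`-type in free variables `β`: it is consistent with `T`
(realized in some model of `T`) and maximal (decides every formula). -/
def IsCompleteTType (L : FirstOrder.Language.{0, 0}) (T : L.Theory) (β : Type)
    (p : Set (L.Formula β)) : Prop :=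
  (∃ (M : Theory.ModelType.{0,0,0} T) (v : β → M), ∀ φ ∈ p, φ.Realize v) ∧
    ∀ φ : L.Formula β, φ ∈ p ∨ φ.not ∈ p

/-- The `L[[ι]]`-sentence `φ((c_{g b})_{b ∈ β})` obtained from the `L`-formula `φ` by
substituting the new constant `c_{g b}` for the free variable `b`. -/
def constSentence (L : FirstOrder.Language.{0, 0}) (ι : Type) {β : Type}
    (φ : L.Formula β) (g : β → ι) : (L[[ι]]).Sentence :=
  ((L.lhomWithConstants ι).onFormula φ).subst fun b => Constants.term (L.con (g b))

/-!
Take a model `M` of `T*` and let `N ⊆ M` be the Skolem hull of the interpretations of the new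
constants. Built-in Skolem functions make `N` an elementary `L`-substructure of `M`; as it contains
the new constants, it is even elementary for `L[[ι]]`, so it is a model of `T*`. Every element of
`N` is the value of an `L`-term at the constants, so a realization in `N` of a type `q ∈ Γ` is the
value of finitely many terms at a finite tuple `(c_γ)_{γ ∈ S}`. That these values realize `q` is
part of the complete type `p_S`, so the same terms would give a realization of `q` in any structure
realizing `p_S`, including one that omits `q`.
-/

section Terms

variable {L : FirstOrder.Language} {ι κ M : Type*} [L.Structure M]

theorem mem_closure_range_iff_exists_term {c : ι → M} {x : M} :
    x ∈ Substructure.closure L (Set.range c) ↔ ∃ t : L.Term ι, t.realize c = x := by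
  constructor
  · intro hx
    obtain ⟨t, rfl⟩ := Substructure.mem_closure_iff_exists_term.1 hx
    refine ⟨t.relabel fun y => y.2.choose, ?_⟩
    rw [Term.realize_relabel]
    exact congrArg (t.realize ·) (funext fun y => y.2.choose_spec)
  · rintro ⟨t, rfl⟩
    exact t.realize_mem c fun i => Substructure.subset_closure (Set.mem_range_self i)

theorem exists_finset_term_realize_eq [Finite κ] (c : ι → M) (t : κ → L.Term ι) :
    ∃ (S : Finset ι) (u : κ → L.Term S),
      ∀ k, (u k).realize (fun s : S => c s) = (t k).realize c := by
  classical
  have := Fintype.ofFinite κ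
  let S : Finset ι := Finset.univ.biUnion fun k => (t k).varFinset
  have hS (k : κ) : (t k).varFinset ⊆ S :=
    Finset.subset_biUnion_of_mem (fun k => (t k).varFinset) (Finset.mem_univ k)
  exact ⟨S, fun k => (t k).restrictVar fun a => ⟨a, hS k a.2⟩,
    fun k => Term.realize_restrictVar c fun _ => rfl⟩

end Terms

theorem realize_formula_subst {L : FirstOrder.Language} {β γ M : Type*} [L.Structure M]
    {φ : L.Formula β} {t : β → L.Term γ} {v : γ → M} :
    Formula.Realize (φ.subst t) v ↔ φ.Realize fun b => (t b).realize v :=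
  BoundedFormula.realize_subst

theorem exists_boundedFormula_realize_iff_realize_snoc {L : FirstOrder.Language} {n : ℕ}
    (φ : L.BoundedFormula Empty (n + 1)) :
    ∃ ψ : L.BoundedFormula (Fin n) 1, ∀ (M : Type*) [L.Structure M] (v : Fin n → M) (b : M),
      ψ.Realize v ![b] ↔ φ.Realize default (Fin.snoc v b : _ → M) := by
  let g : Empty ⊕ Fin (n + 1) → Fin n ⊕ Fin 1 :=
    Sum.elim Empty.elim (Fin.snoc (α := fun _ => Fin n ⊕ Fin 1) Sum.inl (Sum.inr 0))
  refine ⟨BoundedFormula.relabel (n := 1) (k := 0) g φ.toFormula, fun M _ v b => ?_⟩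
  have hg : (Sum.elim v ![b] ∘ g) ∘ Sum.inr = (Fin.snoc v b : _ → M) := by
    funext i
    refine Fin.lastCases ?_ (fun j => ?_) i <;> simp [g]
  refine BoundedFormula.realize_relabel.trans ?_
  rw [Subsingleton.elim (![b] ∘ Fin.natAdd 1 : Fin 0 → M) default, ← Formula.Realize]
  refine (BoundedFormula.realize_toFormula φ _).trans (iff_of_eq ?_)
  exact congrArg₂ φ.Realize (Subsingleton.elim _ _) hg

theorem mem_iff_realize_of_decides {L : FirstOrder.Language} {β M : Type*} [L.Structure M]
    {p : Set (L.Formula β)} (hp : ∀ φ, φ ∈ p ∨ φ.not ∈ p)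
    {v : β → M} (hv : ∀ φ ∈ p, φ.Realize v) {φ : L.Formula β} : φ ∈ p ↔ φ.Realize v :=
  ⟨hv φ, fun h => (hp φ).resolve_right fun hnot => Formula.realize_not.1 (hv _ hnot) h⟩

theorem realize_constSentence {L : FirstOrder.Language.{0, 0}} {ι β : Type} {M : Type*}
    [L.Structure M] [(L[[ι]]).Structure M] [(L.lhomWithConstants ι).IsExpansionOn M]
    (φ : L.Formula β) (g : β → ι) :
    M ⊨ constSentence L ι φ g ↔ φ.Realize fun b => ((L.con (g b) : (L[[ι]]).Constants) : M) := by
  refine realize_formula_subst.trans ?_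
  simp only [Term.realize_constants]
  exact LHom.realize_onFormula (L.lhomWithConstants ι) φ

theorem realize_sentence_iff_of_map_con {L : FirstOrder.Language} {ι M N : Type*}
    [L.Structure M] [(L[[ι]]).Structure M] [(L.lhomWithConstants ι).IsExpansionOn M]
    [L.Structure N] [(L[[ι]]).Structure N] [(L.lhomWithConstants ι).IsExpansionOn N]
    (f : N ↪ₑ[L] M)
    (hf : ∀ i, f ((L.con i : (L[[ι]]).Constants) : N) = ((L.con i : (L[[ι]]).Constants) : M))
    (σ : (L[[ι]]).Sentence) : N ⊨ σ ↔ M ⊨ σ := by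
  rw [← Formula.realize_equivSentence_symm_con N, ← Formula.realize_equivSentence_symm_con M,
    ← f.map_formula]
  simp only [Function.comp_def, hf]

namespace HasBuiltInSkolem

variable {L : FirstOrder.Language.{0, 0}} {T : L.Theory} {M : Type} [L.Structure M]

theorem nonempty_substructure (hSk : HasBuiltInSkolem L T) (A : L.Substructure M) : Nonempty A := by
  -- A Skolem term of a formula without parameters is closed, so its value lies in `A`.
  obtain ⟨t, -⟩ := hSk 0 ⊤
  exact ⟨t.realize finZeroElim, t.realize_mem _ finZeroElim⟩

theorem isElementary_substructure [Nonempty M] [M ⊨ T] (hSk : HasBuiltInSkolem L T)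
    (A : L.Substructure M) : A.IsElementary := by
  refine A.isElementary_of_exists fun n φ x a ha => ?_
  obtain ⟨ψ, hψ⟩ := exists_boundedFormula_realize_iff_realize_snoc φ
  obtain ⟨t, ht⟩ := hSk n ψ
  have hreal : ψ.Realize (fun i => (x i : M)) ![t.realize fun i => (x i : M)] :=
    ht (Theory.ModelType.of T M) _ ⟨a, (hψ M _ a).2 ha⟩
  exact ⟨⟨_, t.realize_mem _ fun i => (x i).2⟩, (hψ M _ _).1 hreal⟩

/-- The Skolem hull of a set `s` in a model of a theory with built-in Skolem functions: the
substructure generated by `s`, bundled with the fact that it is elementary. -/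
def hull [Nonempty M] [M ⊨ T] (hSk : HasBuiltInSkolem L T) (s : Set M) :
    L.ElementarySubstructure M :=
  ⟨Substructure.closure L s, hSk.isElementary_substructure _⟩

theorem omitsIn_hull_range [Nonempty M] [M ⊨ T] (hSk : HasBuiltInSkolem L T) {ι : Type}
    (c : ι → M) {n : ℕ} {q : Set (L.Formula (Fin n))}
    (hc : ∀ S : Finset ι, ∃ (M' : Type) (_ : L.Structure M'), OmitsIn L M' q ∧
      ∃ w : S → M', ∀ φ : L.Formula S, φ.Realize (fun s => c s) → φ.Realize w) :
    OmitsIn L (hSk.hull (Set.range c)) q := by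
  rintro ⟨v, hv⟩
  have hvM : ∀ φ ∈ q, φ.Realize fun i => (v i : M) := fun φ hφ =>
    ((hSk.hull (Set.range c)).subtype.map_formula φ v).2 (hv φ hφ)
  choose t ht using fun i => mem_closure_range_iff_exists_term.1 (v i).2
  obtain ⟨S, u, hu⟩ := exists_finset_term_realize_eq c t
  obtain ⟨M', _, hM', w, hw⟩ := hc S
  refine hM' ⟨fun i => (u i).realize w, fun φ hφ => ?_⟩
  have hsubst : Formula.Realize (φ.subst u) fun s : S => c s :=
    realize_formula_subst.2 (by simpa only [hu, ht] using hvM φ hφ)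
  exact realize_formula_subst.1 (hw _ hsubst)

end HasBuiltInSkolem

theorem stmt4_general {L : FirstOrder.Language.{0, 0}} {T : L.Theory}
    (hSk : HasBuiltInSkolem L T)
    (Γ : Set (Σ n : ℕ, Set (L.Formula (Fin n))))
    {ι : Type} {p : ∀ S : Finset ι, Set (L.Formula S)}
    (hp : ∀ (S : Finset ι) (φ : L.Formula S), φ ∈ p S ∨ φ.not ∈ p S)
    {Tstar : (L[[ι]]).Theory}
    (hT : (L.lhomWithConstants ι).onTheory T ⊆ Tstar)
    (hpS : ∀ (S : Finset ι) (φ : L.Formula S), φ ∈ p S →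
      constSentence L ι φ (fun s => (s : ι)) ∈ Tstar)
    (hcon : Tstar.IsSatisfiable)
    (hreal : ∀ q ∈ Γ, ∀ S : Finset ι, ∃ (M : Type) (_ : L.Structure M),
      OmitsIn L M q.2 ∧ ∃ v : S → M, ∀ φ ∈ p S, φ.Realize v) :
    ∃ N : Theory.ModelType.{0,0,0} Tstar, ∀ q ∈ Γ,
      ¬ ∃ v : Fin q.1 → N, ∀ φ ∈ q.2, ((L.lhomWithConstants ι).onFormula φ).Realize v := by
  obtain ⟨M⟩ := hcon
  let _ : L.Structure M := (L.lhomWithConstants ι).reduct M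
  have : M ⊨ T := (LHom.onTheory_model _ T).1 (M.is_model.mono hT)
  let c : ι → M := fun i => (L.con i : (L[[ι]]).Constants)
  have hc (S : Finset ι) {φ : L.Formula S} : φ ∈ p S ↔ φ.Realize fun s : S => c s :=
    mem_iff_realize_of_decides (hp S) fun φ hφ =>
      (realize_constSentence φ _).1 (M.is_model.realize_of_mem _ (hpS S φ hφ))
  let N : L.ElementarySubstructure M := hSk.hull (Set.range c)
  have : Nonempty N := hSk.nonempty_substructure _
  let _ : (constantsOn ι).Structure N :=
    constantsOn.structure fun i => ⟨c i, Substructure.subset_closure (Set.mem_range_self i)⟩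
  have : N ⊨ Tstar := ⟨fun σ hσ =>
    (realize_sentence_iff_of_map_con N.subtype (fun _ => rfl) σ).2 (M.is_model.realize_of_mem σ hσ)⟩
  have homits : ∀ q ∈ Γ, ¬ ∃ v : Fin q.1 → N, ∀ φ ∈ q.2,
      ((L.lhomWithConstants ι).onFormula φ).Realize v := fun q hq => by
    simp only [LHom.realize_onFormula]
    refine hSk.omitsIn_hull_range c fun S => ?_
    obtain ⟨M', _, hM', w, hw⟩ := hreal q hq S
    exact ⟨M', _, hM', w, fun φ hφ => hw φ ((hc S).2 hφ)⟩
  exact ⟨.of Tstar N, homits⟩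

/-- Morley's method: `T` a theory with built-in Skolem functions, `Γ` a set of types,
`(c_i)_{i<α}` new constants, `p_S` a complete `T`-type for each finite `S ⊆ α`, and `T*` a
consistent theory extending `T ∪ {p_S((c_γ)_{γ ∈ S}) : S ⊆ α finite}` all of whose other
sentences are `L`-sentences; if each `p_S` is realized in some member of `EC(T, Γ)`, then
some model of `T*` omits (the translation of) every type in `Γ`. -/
theorem stmt4 (L : FirstOrder.Language.{0, 0}) (T : L.Theory)
    (hSk : HasBuiltInSkolem L T)
    (Γ : Set (Σ n : ℕ, Set (L.Formula (Fin n))))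
    (α : Ordinal.{0})
    (p : ∀ S : Finset α.ToType, Set (L.Formula ↥S))
    (hp : ∀ S : Finset α.ToType, IsCompleteTType L T ↥S (p S))
    (Tstar : (L[[α.ToType]]).Theory)
    (hext : (L.lhomWithConstants α.ToType).onTheory T ⊆ Tstar)
    (hext' : ∀ (S : Finset α.ToType) (φ : L.Formula ↥S), φ ∈ p S →
      constSentence L α.ToType φ (fun s => (s : α.ToType)) ∈ Tstar)
    (hcon : Tstar.IsSatisfiable)
    (hLsent : ∀ σ ∈ Tstar,
      (¬ ∃ (S : Finset α.ToType) (φ : L.Formula ↥S), φ ∈ p S ∧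
        σ = constSentence L α.ToType φ (fun s => (s : α.ToType))) →
      σ ∈ Set.range (L.lhomWithConstants α.ToType).onSentence)
    (hreal : ∀ S : Finset α.ToType, ∃ M : Theory.ModelType.{0,0,0} T,
      (∀ q ∈ Γ, OmitsIn L M q.2) ∧ ∃ v : ↥S → M, ∀ φ ∈ p S, φ.Realize v) :
    ∃ N : Theory.ModelType.{0,0,0} Tstar, ∀ q ∈ Γ,
      ¬ ∃ v : Fin q.1 → N, ∀ φ ∈ q.2,
        ((L.lhomWithConstants α.ToType).onFormula φ).Realize v := by
  exact stmt4_general hSk Γ (fun S => (hp S).2) hext hext' hcon fun q hq S =>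
    let ⟨M, hM, hv⟩ := hreal S; ⟨M, _, hM q hq, hv⟩
end
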